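/- Let ω be a non-quasianalytic weight function with constant K in condition (α), and let G(D) be given by coefficients satisfying |∂^α G(0)| ≤ α! exp(k − k φ*(|α|/k)) for some k > 0. Then for every μ ∈ ℝ, 1 ≤ p < ∞, and h ∈ ℕ, choosing m ≥ max{kL, hL}, there is a constant C > 0 such that for all f with t_{2m,μ,p}(f) < ∞: ( Σ_β ‖e^{μω} ∂^β (G(D)f)‖_p^p exp(−ph φ*(|β|/h)) )^{1/p} ≤ C · t_{2m,μ,p}(f), where G(D)f = Σ_α i^{|α|} (∂^α G(0)/α!) ∂^α f and t_{λ,μ,p}(f)^p = Σ_α ‖e^{μω}∂^α f‖_p^p exp(−pλφ*(|α|/λ)). In particular G(D) maps D_{L^p_μ,ω}(ℝ^N) continuously into itself. -/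

import Mathlib

open MeasureTheory Real ENNReal Filter

noncomputable section

abbrev Euc (N : ℕ) := EuclideanSpace ℝ (Fin N)

/-- First-order partial derivative in direction `i`. -/
def pd {N : ℕ} (i : Fin N) (f : Euc N → ℂ) : Euc N → ℂ :=
  fun x => fderiv ℝ f x (EuclideanSpace.single i (1:ℝ))

def pdPow {N : ℕ} (i : Fin N) : ℕ → (Euc N → ℂ) → (Euc N → ℂ)
  | 0, f => f
  | n+1, f => pd i (pdPow i n f)

/-- Multi-index partial derivative `∂^α f`. -/
def mderiv {N : ℕ} (α : Fin N → ℕ) (f : Euc N → ℂ) : Euc N → ℂ :=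
  (List.finRange N).foldr (fun i g => pdPow i (α i) g) f

/-- Length `|α|` of a multi-index. -/
def msize {N : ℕ} (α : Fin N → ℕ) : ℕ := ∑ i, α i

/-- Weighted `L^p` norm `‖e^{w} g‖_p` (value in `ℝ≥0∞`). -/
def wLp {N : ℕ} (p : ℝ≥0∞) (w : Euc N → ℝ) (g : Euc N → ℂ) : ℝ≥0∞ :=
  eLpNorm (fun x => Real.exp (w x) * ‖g x‖) p volume

def youngConj (φ : ℝ → ℝ) (s : ℝ) : ℝ :=
  sSup {y | ∃ t ≥ 0, y = s * t - φ t}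

/-- Young conjugate `φ*` of `φ_ω = ω ∘ exp`. -/
def phiStar (ω : ℝ → ℝ) (s : ℝ) : ℝ :=
  youngConj (fun t => ω (Real.exp t)) s

/-- A non-quasianalytic weight function in the sense of Braun–Meise–Taylor. -/
structure IsWeightFun (ω : ℝ → ℝ) : Prop where
  continuous : ContinuousOn ω (Set.Ici 0)
  mono : MonotoneOn ω (Set.Ici 0)
  nonneg : ∀ t, 0 ≤ t → 0 ≤ ω t
  alpha : ∃ K ≥ 1, ∀ t ≥ 0, ω (2*t) ≤ K * (1 + ω t)
  beta : IntegrableOn (fun t => ω t / (1 + t^2)) (Set.Ici 1)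
  gamma : ∃ a b : ℝ, 0 < b ∧ ∀ t ≥ 0, a + b * Real.log (1+t) ≤ ω t
  delta : ConvexOn ℝ (Set.Ici 0) (fun t => ω (Real.exp t))
  vanish : ∀ t ∈ Set.Icc (0:ℝ) 1, ω t = 0

/-- The factorial `α!` of a multi-index. -/
def mfact {N : ℕ} (α : Fin N → ℕ) : ℕ := ∏ i, Nat.factorial (α i)

/-- The ultradifferential operator `G(D)f = Σ_α i^{|α|} (∂^α G(0)/α!) ∂^α f`,
given the coefficients `c α = ∂^α G(0)`. -/
def GD {N : ℕ} (c : (Fin N → ℕ) → ℂ) (f : Euc N → ℂ) : Euc N → ℂ :=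
  fun x => ∑' α : Fin N → ℕ,
    Complex.I ^ (msize α) * (c α / (mfact α : ℂ)) * mderiv α f x

/-- The norm `t_{λ,μ,p}(f)` of `D_{L^p_μ,ω}(ℝ^N)`. -/
def tnorm {N : ℕ} (ω : ℝ → ℝ) (lam μ p : ℝ) (f : Euc N → ℂ) : ℝ≥0∞ :=
  (∑' α : Fin N → ℕ,
    (wLp (ENNReal.ofReal p) (fun x => μ * ω ‖x‖) (mderiv α f)) ^ p *
      ENNReal.ofReal (Real.exp (-(p * lam * phiStar ω ((msize α : ℝ) / lam))))) ^ (1/p)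


/-! ### Young conjugate -/

lemma ph_bdd {ω : ℝ → ℝ} (hω : IsWeightFun ω)
    (hlog : (fun t => Real.log (1 + t)) =o[atTop] ω) (s : ℝ) :
    BddAbove {y | ∃ t ≥ 0, y = s * t - ω (Real.exp t)} := by
  have h1 : (0:ℝ) < 1 / (|s| + 1) := by positivity
  have h2 := hlog.bound h1
  rw [eventually_atTop] at h2
  obtain ⟨A, hA⟩ := h2
  refine ⟨|s| * |A|, ?_⟩
  rintro y ⟨t, ht, rfl⟩
  have hnn := hω.nonneg (Real.exp t) (Real.exp_pos t).le
  by_cases htA : t ≤ |A|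
  · have : s * t ≤ |s| * |A| := by
      calc s * t ≤ |s| * t := by gcongr; exact le_abs_self s
        _ ≤ |s| * |A| := by gcongr
    linarith
  · push Not at htA
    have hge : A ≤ Real.exp t := by
      have := Real.add_one_le_exp t
      have := le_abs_self A
      linarith
    have h3 := hA _ hge
    rw [Real.norm_of_nonneg hnn, Real.norm_of_nonneg (Real.log_nonneg (by
      have := Real.exp_pos t; linarith))] at h3
    have h4 : t ≤ Real.log (1 + Real.exp t) := by
      rw [Real.le_log_iff_exp_le (by positivity)]; linarith
    have h5 : t ≤ 1 / (|s| + 1) * ω (Real.exp t) := h4.trans h3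
    have h6 : (|s| + 1) * t ≤ ω (Real.exp t) := by
      have := mul_le_mul_of_nonneg_left h5 (show 0 ≤ |s| + 1 by positivity)
      rwa [← mul_assoc, mul_one_div_cancel (by positivity), one_mul] at this
    have h7 : s * t ≤ |s| * t := by gcongr; exact le_abs_self s
    have : 0 ≤ |s| * |A| := by positivity
    nlinarith

lemma le_ph {ω : ℝ → ℝ} (hω : IsWeightFun ω)
    (hlog : (fun t => Real.log (1 + t)) =o[atTop] ω) (s t : ℝ) (ht : 0 ≤ t) :
    s * t - ω (Real.exp t) ≤ phiStar ω s :=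
  le_csSup (ph_bdd hω hlog s) ⟨t, ht, rfl⟩

lemma ph_le {ω : ℝ → ℝ} (s b : ℝ) (H : ∀ t ≥ 0, s * t - ω (Real.exp t) ≤ b) :
    phiStar ω s ≤ b := by
  refine csSup_le (s := {y | ∃ t ≥ 0, y = s * t - ω (Real.exp t)})
    ⟨s * 0 - ω (Real.exp 0), 0, le_refl _, rfl⟩ ?_
  rintro y ⟨t, ht, rfl⟩
  exact H t ht

lemma ph_shift {ω : ℝ → ℝ} (hω : IsWeightFun ω)
    (hlog : (fun t => Real.log (1 + t)) =o[atTop] ω) {L : ℝ}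
    (hLprop : ∀ t, 0 ≤ t → ω (Real.exp 1 * t) ≤ L * (1 + ω t))
    {l m y : ℝ} (hl : 0 < l) (hm0 : 0 < m) (hm : l * L ≤ m) :
    m * phiStar ω (y / m) ≤ l * phiStar ω (y / l) - y + l * L := by
  rw [← le_div_iff₀' hm0]
  apply ph_le
  intro t ht
  rw [le_div_iff₀' hm0]
  have h1 := le_ph hω hlog (y / l) (t + 1) (by linarith)
  have h2 := hLprop (Real.exp t) (Real.exp_pos t).le
  rw [← Real.exp_add, add_comm 1 t] at h2
  have hnn := hω.nonneg (Real.exp t) (Real.exp_pos t).le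
  have h3 : l * (y / l * (t + 1) - ω (Real.exp (t + 1))) = y * (t + 1) - l * ω (Real.exp (t + 1)) := by
    field_simp
  have h4 : m * (y / m * t - ω (Real.exp t)) = y * t - m * ω (Real.exp t) := by
    field_simp
  have h5 := mul_le_mul_of_nonneg_left h1 hl.le
  have h6 := mul_le_mul_of_nonneg_left h2 hl.le
  have h7 := mul_le_mul_of_nonneg_right hm hnn
  rw [h4]; rw [h3] at h5
  nlinarith

lemma ph_add {ω : ℝ → ℝ} (hω : IsWeightFun ω)
    (hlog : (fun t => Real.log (1 + t)) =o[atTop] ω) {m a b : ℝ} (hm0 : 0 < m) :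
    2 * m * phiStar ω ((a + b) / (2 * m)) ≤ m * phiStar ω (a / m) + m * phiStar ω (b / m) := by
  have h2m : 0 < 2 * m := by positivity
  rw [← le_div_iff₀' h2m]
  apply ph_le
  intro t ht
  rw [le_div_iff₀' h2m]
  have h1 := mul_le_mul_of_nonneg_left (le_ph hω hlog (a / m) t ht) hm0.le
  have h2 := mul_le_mul_of_nonneg_left (le_ph hω hlog (b / m) t ht) hm0.le
  have h3 : 2 * m * ((a + b) / (2 * m) * t - ω (Real.exp t))
    = m * (a / m * t - ω (Real.exp t)) + m * (b / m * t - ω (Real.exp t)) := by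
    field_simp; ring
  linarith

/-! ### Multi-index derivatives -/

lemma pd_contDiff {N : ℕ} (i : Fin N) {f : Euc N → ℂ} (hf : ContDiff ℝ (⊤ : ℕ∞) f) :
    ContDiff ℝ (⊤ : ℕ∞) (pd i f) := by
  unfold pd
  have : ContDiff ℝ (⊤ : ℕ∞) (fderiv ℝ f) := hf.fderiv_right (by simp)
  exact this.clm_apply contDiff_const

lemma pdPow_contDiff {N : ℕ} (i : Fin N) (n : ℕ) {f : Euc N → ℂ} (hf : ContDiff ℝ (⊤ : ℕ∞) f) :
    ContDiff ℝ (⊤ : ℕ∞) (pdPow i n f) := by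
  induction n with
  | zero => exact hf
  | succ n ih => exact pd_contDiff i ih

lemma fold_contDiff {N : ℕ} (l : List (Fin N)) (α : Fin N → ℕ) {f : Euc N → ℂ}
    (hf : ContDiff ℝ (⊤ : ℕ∞) f) :
    ContDiff ℝ (⊤ : ℕ∞) (l.foldr (fun i g => pdPow i (α i) g) f) := by
  induction l with
  | nil => exact hf
  | cons a l ih => exact pdPow_contDiff a _ ih

lemma pd_comm {N : ℕ} (i j : Fin N) {f : Euc N → ℂ} (hf : ContDiff ℝ (⊤ : ℕ∞) f) :
    pd i (pd j f) = pd j (pd i f) := by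
  have hd : Differentiable ℝ (fderiv ℝ f) :=
    (hf.fderiv_right (m := (⊤ : ℕ∞)) (by simp)).differentiable (by simp)
  have key : ∀ (a b : Fin N) x, pd a (pd b f) x =
      fderiv ℝ (fderiv ℝ f) x (EuclideanSpace.single a 1) (EuclideanSpace.single b 1) := by
    intro a b x
    unfold pd
    rw [fderiv_clm_apply (hd x) (differentiableAt_const _)]
    simp
  funext x
  rw [key, key]
  have hs : IsSymmSndFDerivAt ℝ f x :=
    (hf.contDiffAt (x := x)).isSymmSndFDerivAt (by simpa using (by exact_mod_cast le_top : ((2 : ℕ∞) : WithTop ℕ∞) ≤ ((⊤ : ℕ∞) : WithTop ℕ∞)))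
  exact hs _ _

lemma pd_pdPow {N : ℕ} (i j : Fin N) (n : ℕ) {f : Euc N → ℂ} (hf : ContDiff ℝ (⊤ : ℕ∞) f) :
    pd i (pdPow j n f) = pdPow j n (pd i f) := by
  induction n with
  | zero => rfl
  | succ n ih =>
    show pd i (pd j (pdPow j n f)) = pd j (pdPow j n (pd i f))
    rw [pd_comm i j (pdPow_contDiff j n hf), ih]

lemma pd_fold {N : ℕ} (i : Fin N) (l : List (Fin N)) (α : Fin N → ℕ) {f : Euc N → ℂ}
    (hf : ContDiff ℝ (⊤ : ℕ∞) f) :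
    pd i (l.foldr (fun i g => pdPow i (α i) g) f) =
      l.foldr (fun i g => pdPow i (α i) g) (pd i f) := by
  induction l with
  | nil => rfl
  | cons a l ih =>
    simp only [List.foldr_cons]
    rw [pd_pdPow i a _ (fold_contDiff l α hf), ih]

lemma fold_congr {N : ℕ} (l : List (Fin N)) (α β : Fin N → ℕ) (h : ∀ i ∈ l, α i = β i)
    (f : Euc N → ℂ) : l.foldr (fun i g => pdPow i (α i) g) f =
      l.foldr (fun i g => pdPow i (β i) g) f := by
  induction l with
  | nil => rfl
  | cons a l ih =>
    simp only [List.foldr_cons]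
    rw [ih (fun i hi => h i (by simp [hi])), h a (by simp)]

lemma fold_single {N : ℕ} (i : Fin N) (l : List (Fin N)) (hl : l.Nodup) (hi : i ∈ l)
    (α : Fin N → ℕ) {f : Euc N → ℂ} (hf : ContDiff ℝ (⊤ : ℕ∞) f) :
    l.foldr (fun j g => pdPow j ((α + Pi.single i 1 : Fin N → ℕ) j) g) f =
      l.foldr (fun j g => pdPow j (α j) g) (pd i f) := by
  induction l with
  | nil => simp at hi
  | cons a l ih =>
    simp only [List.foldr_cons]
    rw [List.nodup_cons] at hl
    by_cases hai : i = a
    · subst hai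
      rw [fold_congr l (α + Pi.single i 1) α, ← pd_fold i l α hf,
        ← pd_pdPow i i _ (fold_contDiff l α hf)]
      · simp [pdPow]
      · intro j hj
        have : j ≠ i := fun h => hl.1 (h ▸ hj)
        simp [this]
    · rw [ih hl.2 (by simpa [hai] using hi)]
      have : a ≠ i := fun h => hai h.symm
      simp [this]

lemma mderiv_pd {N : ℕ} (i : Fin N) (α : Fin N → ℕ) {f : Euc N → ℂ}
    (hf : ContDiff ℝ (⊤ : ℕ∞) f) : mderiv α (pd i f) = mderiv (α + Pi.single i 1) f :=
  (fold_single i _ (List.nodup_finRange N) (List.mem_finRange i) α hf).symm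

lemma pd_mderiv {N : ℕ} (i : Fin N) (α : Fin N → ℕ) {f : Euc N → ℂ}
    (hf : ContDiff ℝ (⊤ : ℕ∞) f) : pd i (mderiv α f) = mderiv (α + Pi.single i 1) f := by
  rw [← mderiv_pd i α hf]; exact pd_fold i _ α hf

lemma mderiv_contDiff {N : ℕ} (α : Fin N → ℕ) {f : Euc N → ℂ}
    (hf : ContDiff ℝ (⊤ : ℕ∞) f) : ContDiff ℝ (⊤ : ℕ∞) (mderiv α f) := fold_contDiff _ α hf

lemma fam_pdPow {N : ℕ} (F : (Fin N → ℕ) → Euc N → ℂ)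
    (hF : ∀ i β, pd i (F β) = F (β + Pi.single i 1)) (i : Fin N) (n : ℕ) (δ : Fin N → ℕ) :
    pdPow i n (F δ) = F (δ + Pi.single i n) := by
  induction n with
  | zero => simp [pdPow]
  | succ n ih =>
    show pd i (pdPow i n (F δ)) = _
    rw [ih, hF, add_assoc, ← Pi.single_add]

lemma fam_fold {N : ℕ} (F : (Fin N → ℕ) → Euc N → ℂ)
    (hF : ∀ i β, pd i (F β) = F (β + Pi.single i 1)) (l : List (Fin N)) (β δ : Fin N → ℕ) :
    l.foldr (fun i g => pdPow i (β i) g) (F δ) =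
      F (δ + (l.map (fun i => Pi.single i (β i))).sum) := by
  induction l with
  | nil => simp
  | cons a l ih =>
    simp only [List.foldr_cons, List.map_cons, List.sum_cons]
    rw [ih, fam_pdPow F hF, add_assoc]
    congr 2
    rw [add_comm]

lemma fam_mderiv {N : ℕ} (F : (Fin N → ℕ) → Euc N → ℂ)
    (hF : ∀ i β, pd i (F β) = F (β + Pi.single i 1)) (β δ : Fin N → ℕ) :
    mderiv β (F δ) = F (δ + β) := by
  unfold mderiv
  rw [fam_fold F hF]
  congr 2
  rw [← List.ofFn_eq_map, List.sum_ofFn]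
  exact Finset.univ_sum_single β

lemma mderiv_zero {N : ℕ} (f : Euc N → ℂ) : mderiv 0 f = f := by
  unfold mderiv
  induction (List.finRange N) with
  | nil => rfl
  | cons a l ih => simp [pdPow]

lemma mderiv_mderiv {N : ℕ} (β α : Fin N → ℕ) {f : Euc N → ℂ}
    (hf : ContDiff ℝ (⊤ : ℕ∞) f) : mderiv β (mderiv α f) = mderiv (α + β) f :=
  fam_mderiv (fun β => mderiv β f) (fun i β => pd_mderiv i β hf) β α

lemma msize_add {N : ℕ} (α β : Fin N → ℕ) : msize (α + β) = msize α + msize β := by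
  simp [msize, Finset.sum_add_distrib]

/-! ### Summability -/

lemma summable_exp_msize (N : ℕ) : Summable (fun α : Fin N → ℕ => Real.exp (-(msize α : ℝ))) := by
  induction N with
  | zero => exact summable_of_hasFiniteSupport (Set.finite_univ.subset (Set.subset_univ _))
  | succ N ih =>
    rw [← (Fin.consEquiv (fun _ : Fin (N+1) => ℕ)).summable_iff]
    have h1 : Summable (fun n : ℕ => Real.exp (-(n:ℝ))) := Real.summable_exp_neg_nat
    refine (h1.mul_of_nonneg ih (fun _ => (Real.exp_pos _).le) (fun _ => (Real.exp_pos _).le)).congr ?_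
    rintro ⟨n, α⟩
    simp [msize, Fin.consEquiv, Fin.sum_univ_succ, ← Real.exp_add]
    ring

/-! ### Local Sobolev estimate -/

lemma sob_one {R : ℝ} (hR : 1 ≤ R) {F F' : ℝ → ℂ} (hF : ∀ t, HasDerivAt F (F' t) t)
    (hF' : Continuous F') {x : ℝ} (hx : x ∈ Set.Icc (-R) R) :
    ‖F x‖ₑ ≤ ∫⁻ t in Set.Icc (-R) R, (‖F t‖ₑ + ‖F' t‖ₑ) := by
  have hFc : Continuous F := continuous_iff_continuousAt.2 fun t => (hF t).continuousAt
  set J := ∫⁻ t in Set.Icc (-R) R, ‖F' t‖ₑ with hJ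
  have key : ∀ y ∈ Set.Icc (-R) R, ‖F x‖ₑ - J ≤ ‖F y‖ₑ := by
    intro y hy
    rw [tsub_le_iff_right]
    have h1 : ∫ t in y..x, F' t = F x - F y :=
      intervalIntegral.integral_eq_sub_of_hasDerivAt (fun t _ => hF t)
        (hF'.intervalIntegrable _ _)
    have h2 : F x = F y + ∫ t in y..x, F' t := by rw [h1]; ring
    rw [h2]
    refine (enorm_add_le _ _).trans ?_
    gcongr
    have h3 : ‖∫ t in y..x, F' t‖ₑ = ‖∫ t in Set.uIoc y x, F' t‖ₑ := by
      rw [← ofReal_norm, ← ofReal_norm, intervalIntegral.norm_intervalIntegral_eq]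
    rw [h3]
    refine (enorm_integral_le_lintegral_enorm _).trans ?_
    refine lintegral_mono_set ?_
    exact Set.uIoc_subset_uIcc.trans (Set.uIcc_subset_Icc hy hx)
  rw [lintegral_add_left (by fun_prop), ← tsub_le_iff_right]
  calc ‖F x‖ₑ - J ≤ (‖F x‖ₑ - J) * volume (Set.Icc (-R) R) := by
        rw [Real.volume_Icc]
        refine le_mul_of_one_le_right zero_le ?_
        rw [ENNReal.one_le_ofReal]; linarith
    _ = ∫⁻ _ in Set.Icc (-R) R, (‖F x‖ₑ - J) := by rw [setLIntegral_const]
    _ ≤ ∫⁻ t in Set.Icc (-R) R, ‖F t‖ₑ := setLIntegral_mono' measurableSet_Icc key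

def ind {N : ℕ} (γ : Finset (Fin N)) : Fin N → ℕ := fun j => if j ∈ γ then 1 else 0

lemma ind_insert {N : ℕ} {γ : Finset (Fin N)} {i : Fin N} (hi : i ∉ γ) :
    ind (insert i γ) = ind γ + Pi.single i 1 := by
  funext j
  by_cases h : j = i
  · subst h; simp [ind, hi]
  · simp [ind, h]

lemma ind_empty {N : ℕ} : ind (∅ : Finset (Fin N)) = 0 := by
  funext j; simp [ind]

lemma update_line {N : ℕ} (x : Fin N → ℝ) (i : Fin N) (t : ℝ) :
    (WithLp.toLp 2 (Function.update x i t) : Euc N) =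
      WithLp.toLp 2 x + (t - x i) • EuclideanSpace.single i (1:ℝ) := by
  ext j
  by_cases h : j = i
  · subst h; simp
  · simp [h]

lemma sob_marg {N : ℕ} {R : ℝ} (hR : 1 ≤ R) (s : Finset (Fin N)) :
    ∀ g : Euc N → ℂ, ContDiff ℝ (⊤ : ℕ∞) g → ∀ x : Fin N → ℝ, (∀ i, x i ∈ Set.Icc (-R) R) →
      ‖g (WithLp.toLp 2 x)‖ₑ ≤
        lmarginal (fun _ : Fin N => (volume : Measure ℝ).restrict (Set.Icc (-R) R)) s
          (fun y => ∑ γ ∈ s.powerset, ‖mderiv (ind γ) g (WithLp.toLp 2 y)‖ₑ) x := by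
  induction s using Finset.induction_on with
  | empty =>
    intro g hg x hx
    simp [ind_empty, mderiv_zero]
  | insert i s hi ih =>
    intro g hg x hx
    have hmeas : ∀ (u : Euc N → ℂ), ContDiff ℝ (⊤ : ℕ∞) u → ∀ γ,
        Measurable (fun y : Fin N → ℝ => ‖mderiv (ind γ) u (WithLp.toLp 2 y)‖ₑ) := by
      intro u hu γ
      have h1 := (mderiv_contDiff (ind γ) hu).continuous
      have h2 : Continuous (fun y : Fin N → ℝ => mderiv (ind γ) u (WithLp.toLp 2 y)) :=
        h1.comp (PiLp.continuous_toLp 2 _)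
      exact h2.enorm.measurable
    rw [lmarginal_insert _ (Finset.measurable_fun_sum _ fun γ _ => hmeas g hg γ) hi]
    have hline : ∀ t, HasDerivAt (fun t => g (WithLp.toLp 2 (Function.update x i t)))
        (pd i g (WithLp.toLp 2 (Function.update x i t))) t := by
      intro t
      have h1 : HasDerivAt (fun t : ℝ => (WithLp.toLp 2 (Function.update x i t) : Euc N))
          (EuclideanSpace.single i (1:ℝ)) t := by
        simp_rw [update_line]
        have := ((((hasDerivAt_id t).sub_const (x i)).smul_const
          (EuclideanSpace.single i (1:ℝ) : Euc N))).const_add (WithLp.toLp 2 x)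
        simpa using this
      have h2 : HasFDerivAt g (fderiv ℝ g (WithLp.toLp 2 (Function.update x i t)))
          (WithLp.toLp 2 (Function.update x i t)) :=
        (hg.differentiable (by simp) _).hasFDerivAt
      exact h2.comp_hasDerivAt t h1
    have hcont : Continuous (fun t => pd i g (WithLp.toLp 2 (Function.update x i t))) := by
      refine (pd_contDiff i hg).continuous.comp ((PiLp.continuous_toLp 2 _).comp ?_)
      exact continuous_const.update i continuous_id
    have h1 := sob_one hR hline hcont (hx i)
    simp only [Function.update_eq_self] at h1
    refine h1.trans (setLIntegral_mono' measurableSet_Icc ?_)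
    intro t ht
    have hx' : ∀ j, Function.update x i t j ∈ Set.Icc (-R) R := by
      intro j
      by_cases h : j = i
      · subst h; simpa using ht
      · simpa [h] using hx j
    refine (add_le_add (ih g hg _ hx') (ih _ (pd_contDiff i hg) _ hx')).trans ?_
    simp only [lmarginal]
    rw [← lintegral_add_left]
    · refine lintegral_mono fun y => ?_
      rw [Finset.sum_powerset_insert hi]
      refine le_of_eq (congrArg₂ _ rfl (Finset.sum_congr rfl fun γ hγ => ?_))
      have : i ∉ γ := fun h => hi (Finset.mem_powerset.1 hγ h)
      rw [ind_insert this, mderiv_pd i _ hg]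
    · exact (Finset.measurable_fun_sum _ fun γ _ => hmeas g hg γ).comp measurable_updateFinset

def box (N : ℕ) (R : ℝ) : Set (Euc N) := WithLp.ofLp ⁻¹' (Set.univ.pi fun _ => Set.Icc (-R) R)

lemma box_compact (N : ℕ) (R : ℝ) : IsCompact (box N R) :=
  (EuclideanSpace.equiv (Fin N) ℝ).toHomeomorph.isCompact_preimage.2
    (isCompact_univ_pi fun _ => isCompact_Icc)

lemma ball_subset_box (N : ℕ) (R : ℝ) : Metric.ball (0 : Euc N) R ⊆ box N R := by
  intro x hx
  rw [mem_ball_zero_iff] at hx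
  intro i _
  have := (PiLp.norm_apply_le x i).trans hx.le
  rw [Real.norm_eq_abs, abs_le] at this
  exact this

lemma sob_box {N : ℕ} {R : ℝ} (hR : 1 ≤ R) (g : Euc N → ℂ) (hg : ContDiff ℝ (⊤ : ℕ∞) g)
    (x : Euc N) (hx : x ∈ box N R) :
    ‖g x‖ₑ ≤ ∑ γ ∈ (Finset.univ : Finset (Fin N)).powerset,
      ∫⁻ z in box N R, ‖mderiv (ind γ) g z‖ₑ := by
  have h1 := sob_marg hR Finset.univ g hg (WithLp.ofLp x) (fun i => hx i (Set.mem_univ i))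
  rw [lmarginal_univ] at h1
  have hmeas : ∀ γ, Measurable (fun y : Euc N => ‖mderiv (ind γ) g y‖ₑ) := fun γ =>
    (mderiv_contDiff (ind γ) hg).continuous.enorm.measurable
  have hto : Measurable (fun y : Fin N → ℝ => (WithLp.toLp 2 y : Euc N)) :=
    (PiLp.continuous_toLp 2 _).measurable
  have hmeas' : ∀ γ, Measurable (fun y : Fin N → ℝ => ‖mderiv (ind γ) g (WithLp.toLp 2 y)‖ₑ) :=
    fun γ => (hmeas γ).comp hto
  beta_reduce at h1
  rw [lintegral_finsetSum _ (fun γ _ => hmeas' γ)] at h1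
  refine h1.trans (le_of_eq (Finset.sum_congr rfl fun γ _ => ?_))
  rw [← Measure.restrict_pi_pi]
  have hbm : MeasurableSet (box N R) := (box_compact N R).measurableSet
  rw [← (PiLp.volume_preserving_toLp (Fin N)).setLIntegral_comp_preimage hbm (hmeas γ)]
  rfl

lemma loc_bound {N : ℕ} (R : ℝ) (p : ℝ≥0∞) (hp : 1 ≤ p) (w : Euc N → ℝ) (hw : Continuous w) :
    ∃ C : ℝ≥0∞, C ≠ ⊤ ∧ ∀ u : Euc N → ℂ, Continuous u →
      ∫⁻ z in box N R, ‖u z‖ₑ ≤ C * wLp p w u := by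
  obtain ⟨M, hM⟩ := ((box_compact N R).image (f := fun x => -w x) hw.neg).bddAbove
  have hM' : ∀ x ∈ box N R, -w x ≤ M := fun x hx => hM ⟨x, hx, rfl⟩
  refine ⟨ENNReal.ofReal (Real.exp M) * (volume (box N R)) ^ (1 / (1:ℝ≥0∞).toReal - 1 / p.toReal),
    ?_, ?_⟩
  · refine ENNReal.mul_ne_top ENNReal.ofReal_ne_top ?_
    refine ENNReal.rpow_ne_top_of_nonneg ?_ (box_compact N R).measure_lt_top.ne
    simp only [ENNReal.toReal_one, div_one, sub_nonneg]
    by_cases hpt : p = ⊤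
    · simp [hpt]
    · have : 1 ≤ p.toReal := by
        have := ENNReal.toReal_mono hpt hp
        simpa using this
      rw [div_le_one (by linarith)]; exact this
  · intro u hu
    rw [← eLpNorm_one_eq_lintegral_enorm]
    refine (eLpNorm_le_eLpNorm_mul_rpow_measure_univ hp hu.aestronglyMeasurable).trans ?_
    rw [Measure.restrict_apply_univ, mul_right_comm]
    gcongr
    refine (eLpNorm_le_mul_eLpNorm_of_ae_le_mul (c := Real.exp M)
      (g := fun x => Real.exp (w x) * ‖u x‖) ?_ p).trans ?_
    · refine (ae_restrict_iff' (box_compact N R).measurableSet).2 (Eventually.of_forall ?_)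
      intro x hx
      rw [Real.norm_of_nonneg (by positivity), ← mul_assoc, ← Real.exp_add]
      refine le_mul_of_one_le_left (norm_nonneg _) ?_
      rw [Real.one_le_exp_iff]
      linarith [hM' x hx]
    · gcongr
      exact eLpNorm_mono_measure _ Measure.restrict_le_self

lemma sob_final {N : ℕ} {R : ℝ} (hR : 1 ≤ R) (p : ℝ≥0∞) (hp : 1 ≤ p) (w : Euc N → ℝ)
    (hw : Continuous w) :
    ∃ C : ℝ≥0∞, C ≠ ⊤ ∧ ∀ g : Euc N → ℂ, ContDiff ℝ (⊤ : ℕ∞) g → ∀ x ∈ box N R,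
      ‖g x‖ₑ ≤ C * ∑ γ ∈ (Finset.univ : Finset (Fin N)).powerset, wLp p w (mderiv (ind γ) g) := by
  obtain ⟨C, hC, H⟩ := loc_bound (N := N) R p hp w hw
  refine ⟨C, hC, fun g hg x hx => (sob_box hR g hg x hx).trans ?_⟩
  rw [Finset.mul_sum]
  exact Finset.sum_le_sum fun γ _ => H _ (mderiv_contDiff _ hg).continuous

/-! ### Minkowski -/

lemma wLp_tsum_le {N : ℕ} {p : ℝ≥0∞} (hp : 1 ≤ p) {w : Euc N → ℝ} (hw : Continuous w)
    {ι : Type*} [Countable ι] (u : ι → Euc N → ℂ) (hu : ∀ a, Continuous (u a))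
    (hs : ∀ x, Summable (fun a => u a x)) :
    wLp p w (fun x => ∑' a, u a x) ≤ ∑' a, wLp p w (u a) := by
  have hrw : ∀ g : Euc N → ℂ, wLp p w g = eLpNorm (fun x => (Real.exp (w x) : ℂ) * g x) p volume := by
    intro g
    refine eLpNorm_congr_norm_ae (Eventually.of_forall fun x => ?_)
    simp [Complex.norm_exp]
  have hc : ∀ a, Continuous (fun x => (Real.exp (w x) : ℂ) * u a x) := fun a =>
    (Complex.continuous_ofReal.comp (Real.continuous_exp.comp hw)).mul (hu a)
  simp_rw [hrw]
  refine Lp.eLpNorm_le_of_ae_tendsto (u := (atTop : Filter (Finset ι)))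
    (f := fun s => ∑ a ∈ s, fun x => (Real.exp (w x) : ℂ) * u a x)
    (Eventually.of_forall fun s => ?_) (fun s => ?_) (Eventually.of_forall fun x => ?_)
  · exact (eLpNorm_sum_le (fun a _ => (hc a).aestronglyMeasurable) hp).trans
      (ENNReal.sum_le_tsum s)
  · exact Finset.aestronglyMeasurable_sum s fun a _ => (hc a).aestronglyMeasurable
  · have := ((hs x).hasSum.mul_left (Real.exp (w x) : ℂ))
    simpa [HasSum, Finset.sum_apply] using this

/-! ### Termwise differentiation -/

lemma norm_fderiv_le {N : ℕ} (u : Euc N → ℂ) (x : Euc N) :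
    ‖fderiv ℝ u x‖ ≤ ∑ i, ‖pd i u x‖ := by
  refine ContinuousLinearMap.opNorm_le_bound _ (by positivity) fun v => ?_
  have hv : v = ∑ i, v i • EuclideanSpace.single i (1:ℝ) := by
    ext j
    simp [Finset.sum_apply, Pi.single_apply]
  conv_lhs => rw [hv]
  rw [map_sum, Finset.sum_mul]
  refine (norm_sum_le _ _).trans (Finset.sum_le_sum fun i _ => ?_)
  rw [map_smul, norm_smul, mul_comm]
  exact mul_le_mul_of_nonneg_left (PiLp.norm_apply_le v i) (norm_nonneg _)

lemma termwise {N : ℕ} (a : (Fin N → ℕ) → ℂ) (f : Euc N → ℂ) (hf : ContDiff ℝ (⊤ : ℕ∞) f)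
    (hb : ∀ R : ℝ, 1 ≤ R → ∀ β : Fin N → ℕ, ∃ C : ℝ, ∀ α, ∀ x ∈ box N R,
      ‖a α * mderiv (α + β) f x‖ ≤ C * Real.exp (-(msize α : ℝ))) (β : Fin N → ℕ) :
    (∀ x, Summable fun α => a α * mderiv (α + β) f x) ∧
    Differentiable ℝ (fun x => ∑' α, a α * mderiv (α + β) f x) ∧
    ∀ i, pd i (fun x => ∑' α, a α * mderiv (α + β) f x) =
      fun x => ∑' α, a α * mderiv (α + (β + Pi.single i 1)) f x := by
  have hsum : ∀ x, Summable fun α => a α * mderiv (α + β) f x := by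
    intro x
    obtain ⟨C, hC⟩ := hb (‖x‖ + 1) (by linarith [norm_nonneg x]) β
    refine Summable.of_norm_bounded ((summable_exp_msize N).mul_left C) fun α => hC α x ?_
    exact ball_subset_box N _ (by simp)
  have hder : ∀ x, Summable (fun α => a α • fderiv ℝ (mderiv (α + β) f) x) ∧
      HasFDerivAt (fun x => ∑' α, a α * mderiv (α + β) f x)
      (∑' α, a α • fderiv ℝ (mderiv (α + β) f) x) x := by
    intro x
    choose C hC using fun i => hb (‖x‖ + 1) (by linarith [norm_nonneg x]) (β + Pi.single i 1)
    have hu : Summable (fun α : Fin N → ℕ => (∑ i, C i) * Real.exp (-(msize α : ℝ))) :=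
      (summable_exp_msize N).mul_left _
    have hx : x ∈ Metric.ball (0 : Euc N) (‖x‖ + 1) := by simp
    have hbd : ∀ (α : Fin N → ℕ), ∀ y ∈ Metric.ball (0 : Euc N) (‖x‖ + 1),
        ‖a α • fderiv ℝ (mderiv (α + β) f) y‖ ≤ (∑ i, C i) * Real.exp (-(msize α : ℝ)) := by
      intro α y hy
      rw [norm_smul]
      refine (mul_le_mul_of_nonneg_left (norm_fderiv_le _ y) (norm_nonneg _)).trans ?_
      rw [Finset.mul_sum, Finset.sum_mul]
      refine Finset.sum_le_sum fun i _ => ?_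
      have := hC i α y (ball_subset_box N _ hy)
      rwa [← add_assoc, ← pd_mderiv i _ hf, norm_mul] at this
    refine ⟨Summable.of_norm_bounded hu fun α => hbd α x hx, ?_⟩
    refine hasFDerivAt_tsum_of_isPreconnected
      (f' := fun α y => a α • fderiv ℝ (mderiv (α + β) f) y) hu Metric.isOpen_ball
      (convex_ball _ _).isPreconnected ?_ hbd hx (hsum x) hx
    intro α y _
    exact (((mderiv_contDiff (α + β) hf).differentiable (by simp)) y).hasFDerivAt.const_mul (a α)
  refine ⟨hsum, fun x => (hder x).2.differentiableAt, fun i => ?_⟩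
  funext x
  unfold pd
  rw [(hder x).2.fderiv]
  have h1 := (ContinuousLinearMap.apply ℝ ℂ (EuclideanSpace.single i (1:ℝ) : Euc N)).map_tsum
    (hder x).1
  simp only [ContinuousLinearMap.apply_apply] at h1
  rw [h1]
  refine tsum_congr fun α => ?_
  rw [← add_assoc, ← pd_mderiv i _ hf]
  rfl

open Asymptotics in
/-- An ultradifferential operator of `ω`-class maps `D_{L^p_μ,ω}(ℝ^N)` continuously
into itself: `t_{h,μ,p}(G(D)f) ≤ C t_{2m,μ,p}(f)` for `m ≥ max{kL, hL}`. -/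
theorem GD_continuous_on_DLp
    {N : ℕ} (ω : ℝ → ℝ) (hω : IsWeightFun ω)
    (hlog : (fun t => Real.log (1 + t)) =o[atTop] ω)
    (L : ℝ) (hL : 1 ≤ L)
    (hLprop : ∀ t, 0 ≤ t → ω (Real.exp 1 * t) ≤ L * (1 + ω t))
    (k : ℝ) (hk : 0 < k)
    (c : (Fin N → ℕ) → ℂ)
    (hc : ∀ α : Fin N → ℕ,
      ‖c α‖ ≤ (mfact α : ℝ) * Real.exp (k - k * phiStar ω ((msize α : ℝ) / k)))
    (μ : ℝ) (p : ℝ) (hp : 1 ≤ p) (h : ℕ) (hh : 0 < h)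
    (m : ℕ) (hm : max (k * L) ((h : ℝ) * L) ≤ (m : ℝ)) :
    ∃ C > 0, ∀ f : Euc N → ℂ, ContDiff ℝ (⊤ : ℕ∞) f →
      tnorm ω (2 * (m : ℝ)) μ p f < ⊤ →
      tnorm ω (h : ℝ) μ p (GD c f) ≤ ENNReal.ofReal C * tnorm ω (2 * (m : ℝ)) μ p f := by
  have hp0 : 0 < p := by linarith
  have hP : (1:ℝ≥0∞) ≤ ENNReal.ofReal p := by rwa [ENNReal.one_le_ofReal]
  have hh' : (0:ℝ) < h := by exact_mod_cast hh
  have hkm : k * L ≤ m := (le_max_left _ _).trans hm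
  have hhm : h * L ≤ m := (le_max_right _ _).trans hm
  have hm0 : (0:ℝ) < m := lt_of_lt_of_le (by positivity) hkm
  have h2m0 : (0:ℝ) < 2 * m := by positivity
  have hw : Continuous (fun x : Euc N => μ * ω ‖x‖) :=
    continuous_const.mul (hω.continuous.comp_continuous continuous_norm fun x => norm_nonneg x)
  set w : Euc N → ℝ := fun x => μ * ω ‖x‖ with hwdef
  set a : (Fin N → ℕ) → ℂ := fun α => Complex.I ^ (msize α) * (c α / (mfact α : ℂ)) with hadef
  have ha : ∀ α, ‖a α‖ ≤ Real.exp (k - k * phiStar ω ((msize α : ℝ) / k)) := by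
    intro α
    have hpos : (0:ℝ) < mfact α := by
      exact_mod_cast Finset.prod_pos fun i _ => Nat.factorial_pos _
    simp only [hadef, norm_mul, norm_pow, Complex.norm_I, one_pow, one_mul, norm_div,
      Complex.norm_natCast]
    rw [div_le_iff₀' hpos]
    exact hc α
  set S : ℝ := ∑' α : Fin N → ℕ, Real.exp (-(msize α : ℝ)) with hS
  have hSpos : 0 ≤ S := tsum_nonneg fun _ => (Real.exp_pos _).le
  have hSe : ∑' α : Fin N → ℕ, ENNReal.ofReal (Real.exp (-(msize α : ℝ))) = ENNReal.ofReal S :=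
    (ENNReal.ofReal_tsum_of_nonneg (fun _ => (Real.exp_pos _).le) (summable_exp_msize N)).symm
  set M : ℝ := Real.exp (k + k * L + h * L) * S with hM
  have hMpos : 0 ≤ M := by positivity
  refine ⟨M * S ^ (1 / p) + 1, by positivity, fun f hf hT => ?_⟩
  set T := tnorm ω (2 * (m:ℝ)) μ p f with hTdef
  -- each derivative is controlled
  have hder : ∀ α : Fin N → ℕ, wLp (ENNReal.ofReal p) w (mderiv α f) ≤
      T * ENNReal.ofReal (Real.exp (2 * m * phiStar ω ((msize α : ℝ) / (2 * m)))) := by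
    intro α
    have h1 : (wLp (ENNReal.ofReal p) w (mderiv α f)) ^ p *
      ENNReal.ofReal (Real.exp (-(p * (2 * m) * phiStar ω ((msize α : ℝ) / (2 * m))))) ≤ T ^ p := by
      rw [hTdef, tnorm, ← ENNReal.rpow_mul, one_div_mul_cancel hp0.ne', ENNReal.rpow_one]
      exact ENNReal.le_tsum (f := fun α : Fin N → ℕ => (wLp (ENNReal.ofReal p) w (mderiv α f)) ^ p *
        ENNReal.ofReal (Real.exp (-(p * (2 * m) * phiStar ω ((msize α : ℝ) / (2 * m)))))) α
    rw [← ENNReal.rpow_le_rpow_iff hp0, ENNReal.mul_rpow_of_nonneg _ _ hp0.le,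
      ENNReal.ofReal_rpow_of_pos (Real.exp_pos _), ← Real.exp_mul]
    calc (wLp (ENNReal.ofReal p) w (mderiv α f)) ^ p
        = (wLp (ENNReal.ofReal p) w (mderiv α f)) ^ p *
          ENNReal.ofReal (Real.exp (-(p * (2 * m) * phiStar ω ((msize α : ℝ) / (2 * m))))) *
          ENNReal.ofReal (Real.exp (2 * m * phiStar ω ((msize α : ℝ) / (2 * m)) * p)) := by
          rw [mul_assoc, ← ENNReal.ofReal_mul (Real.exp_pos _).le, ← Real.exp_add]
          rw [show -(p * (2 * m) * phiStar ω ((msize α : ℝ) / (2 * m))) +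
            2 * m * phiStar ω ((msize α : ℝ) / (2 * m)) * p = 0 by ring]
          simp
      _ ≤ _ := by gcongr
  -- exponent inequality
  have hexp1 : ∀ (α : Fin N → ℕ) (y : ℝ),
      k - k * phiStar ω ((msize α : ℝ) / k) + 2 * m * phiStar ω (((msize α : ℝ) + y) / (2 * m))
        ≤ k + k * L - msize α + m * phiStar ω (y / m) := by
    intro α y
    have h1 := ph_add hω hlog (a := (msize α : ℝ)) (b := y) hm0
    have h2 := ph_shift hω hlog hLprop (y := (msize α : ℝ)) hk hm0 hkm
    linarith
  -- local bounds
  have hb : ∀ R : ℝ, 1 ≤ R → ∀ β : Fin N → ℕ, ∃ C : ℝ, ∀ α, ∀ x ∈ box N R,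
      ‖a α * mderiv (α + β) f x‖ ≤ C * Real.exp (-(msize α : ℝ)) := by
    intro R hR β
    obtain ⟨C, hC, HC⟩ := sob_final (N := N) hR (ENNReal.ofReal p) hP w hw
    set D : ℝ≥0∞ := C * ∑ γ ∈ (Finset.univ : Finset (Fin N)).powerset,
      T * ENNReal.ofReal (Real.exp (k + k * L +
        m * phiStar ω (((msize β : ℝ) + msize (ind γ)) / m))) with hD
    have hDtop : D ≠ ⊤ := by
      refine ENNReal.mul_ne_top hC (ENNReal.sum_ne_top.2 fun γ _ => ?_)
      exact ENNReal.mul_ne_top hT.ne ENNReal.ofReal_ne_top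
    refine ⟨D.toReal, fun α x hx => ?_⟩
    have h1 : ‖a α * mderiv (α + β) f x‖ₑ ≤ D * ENNReal.ofReal (Real.exp (-(msize α : ℝ))) := by
      rw [enorm_mul, hD, mul_assoc, Finset.sum_mul]
      have h2 := HC _ (mderiv_contDiff (α + β) hf) x hx
      have h3 : ‖a α‖ₑ ≤ ENNReal.ofReal (Real.exp (k - k * phiStar ω ((msize α : ℝ) / k))) := by
        rw [← ofReal_norm]; exact ENNReal.ofReal_le_ofReal (ha α)
      refine (mul_le_mul' h3 h2).trans ?_
      rw [mul_left_comm]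
      refine mul_le_mul' le_rfl ?_
      rw [Finset.mul_sum]
      refine Finset.sum_le_sum fun γ _ => ?_
      rw [mderiv_mderiv _ _ hf]
      refine (mul_le_mul' le_rfl (hder _)).trans ?_
      rw [mul_left_comm, mul_assoc T]
      refine mul_le_mul' le_rfl ?_
      rw [← ENNReal.ofReal_mul (Real.exp_pos _).le, ← ENNReal.ofReal_mul (Real.exp_pos _).le,
        ← Real.exp_add, ← Real.exp_add]
      refine ENNReal.ofReal_le_ofReal (Real.exp_le_exp.2 ?_)
      rw [msize_add, msize_add]
      push_cast
      rw [add_assoc (msize α : ℝ)]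
      linarith [hexp1 α ((msize β : ℝ) + msize (ind γ))]
    have h2 := ENNReal.toReal_mono (ENNReal.mul_ne_top hDtop ENNReal.ofReal_ne_top) h1
    rwa [toReal_enorm, ENNReal.toReal_mul, ENNReal.toReal_ofReal (Real.exp_pos _).le] at h2
  have htw := termwise a f hf hb
  -- derivatives of GD
  have hGD : ∀ β, mderiv β (GD c f) = fun x => ∑' α, a α * mderiv (α + β) f x := by
    intro β
    have h1 := fam_mderiv (fun β x => ∑' α, a α * mderiv (α + β) f x)
      (fun i β => (htw β).2.2 i) β 0
    have h2 : GD c f = fun x => ∑' α, a α * mderiv (α + 0) f x := by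
      funext x; simp [GD, hadef]
    rw [h2, h1, zero_add]
  have hmain : ∀ β : Fin N → ℕ, wLp (ENNReal.ofReal p) w (mderiv β (GD c f)) ≤
      T * ENNReal.ofReal (M * Real.exp (-(msize β : ℝ)) *
        Real.exp (h * phiStar ω ((msize β : ℝ) / h))) := by
    intro β
    rw [hGD]
    refine (wLp_tsum_le hP hw (fun α x => a α * mderiv (α + β) f x)
      (fun α => continuous_const.mul (mderiv_contDiff _ hf).continuous) (htw β).1).trans ?_
    have hterm : ∀ α : Fin N → ℕ, wLp (ENNReal.ofReal p) w (fun x => a α * mderiv (α + β) f x) ≤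
        T * ENNReal.ofReal (Real.exp (k + k * L + h * L - msize β +
          h * phiStar ω ((msize β : ℝ) / h))) * ENNReal.ofReal (Real.exp (-(msize α : ℝ))) := by
      intro α
      have h1 : wLp (ENNReal.ofReal p) w (fun x => a α * mderiv (α + β) f x) ≤
          ENNReal.ofReal (Real.exp (k - k * phiStar ω ((msize α : ℝ) / k))) *
            wLp (ENNReal.ofReal p) w (mderiv (α + β) f) := by
        refine eLpNorm_le_mul_eLpNorm_of_ae_le_mul (Eventually.of_forall fun x => ?_) _
        rw [Real.norm_of_nonneg (by positivity), Real.norm_of_nonneg (by positivity), norm_mul,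
          mul_left_comm]
        exact mul_le_mul_of_nonneg_right (ha α) (by positivity)
      refine (h1.trans (mul_le_mul' le_rfl (hder _))).trans ?_
      rw [mul_left_comm, mul_assoc T]
      refine mul_le_mul' le_rfl ?_
      rw [← ENNReal.ofReal_mul (Real.exp_pos _).le, ← ENNReal.ofReal_mul (Real.exp_pos _).le,
        ← Real.exp_add, ← Real.exp_add]
      refine ENNReal.ofReal_le_ofReal (Real.exp_le_exp.2 ?_)
      rw [msize_add]
      push_cast
      have h2 := ph_shift hω hlog hLprop (y := (msize β : ℝ)) hh' hm0 hhm
      linarith [hexp1 α (msize β : ℝ)]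
    refine (ENNReal.tsum_le_tsum hterm).trans ?_
    rw [ENNReal.tsum_mul_left, hSe, mul_assoc, ← ENNReal.ofReal_mul (Real.exp_pos _).le]
    refine mul_le_mul' le_rfl (ENNReal.ofReal_le_ofReal (le_of_eq ?_))
    rw [hM, Real.exp_add, sub_eq_add_neg, Real.exp_add]
    ring
  -- conclusion
  have hfin : ∀ β : Fin N → ℕ, (wLp (ENNReal.ofReal p) w (mderiv β (GD c f))) ^ p *
      ENNReal.ofReal (Real.exp (-(p * h * phiStar ω ((msize β : ℝ) / h)))) ≤
      T ^ p * ENNReal.ofReal (M ^ p) * ENNReal.ofReal (Real.exp (-(msize β : ℝ))) := by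
    intro β
    refine (mul_le_mul' (ENNReal.rpow_le_rpow (hmain β) hp0.le) le_rfl).trans ?_
    rw [ENNReal.mul_rpow_of_nonneg _ _ hp0.le, ENNReal.ofReal_rpow_of_nonneg (by positivity) hp0.le,
      mul_assoc (T ^ p), mul_assoc (T ^ p)]
    refine mul_le_mul' le_rfl ?_
    rw [← ENNReal.ofReal_mul (by positivity), ← ENNReal.ofReal_mul (by positivity)]
    refine ENNReal.ofReal_le_ofReal ?_
    rw [mul_assoc, Real.mul_rpow hMpos (by positivity), mul_assoc]
    refine mul_le_mul_of_nonneg_left ?_ (by positivity)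
    rw [← Real.exp_add, ← Real.exp_mul, ← Real.exp_add]
    refine Real.exp_le_exp.2 ?_
    have : (0:ℝ) ≤ msize β := by positivity
    nlinarith
  have hstep : tnorm ω (h : ℝ) μ p (GD c f) ≤
      (T ^ p * ENNReal.ofReal (M ^ p) * ENNReal.ofReal S) ^ (1 / p) := by
    refine ENNReal.rpow_le_rpow ?_ (by positivity)
    refine (ENNReal.tsum_le_tsum hfin).trans ?_
    rw [ENNReal.tsum_mul_left, hSe]
  refine hstep.trans ?_
  have hip : 0 ≤ 1 / p := by positivity
  rw [ENNReal.mul_rpow_of_nonneg _ _ hip, ENNReal.mul_rpow_of_nonneg _ _ hip, ← ENNReal.rpow_mul,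
    mul_one_div_cancel hp0.ne', ENNReal.rpow_one,
    ENNReal.ofReal_rpow_of_nonneg (by positivity) hip, ENNReal.ofReal_rpow_of_nonneg hSpos hip,
    ← Real.rpow_mul hMpos, mul_one_div_cancel hp0.ne', Real.rpow_one, mul_assoc,
    ← ENNReal.ofReal_mul hMpos, mul_comm]
  refine mul_le_mul' (ENNReal.ofReal_le_ofReal (by linarith)) le_rfl
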